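/- Lemma 4: fix an iteration i (1 ≤ i ≤ ⌈m/2⌉) of Algorithm 2 run with the x-approval rule, and let s_k(c) be the total score of candidate c in F(p⃗ ∪ p⃗_M) after all k stages. Then for all u_1, u_2 ∈ U^i, if s_k(u_1) = s_k(u_2) + 1 then u_2 is preferred over u_1 by the fixed tie-breaking order; similarly, for all d_1, d_2 ∈ D^i, if s_k(d_1) = s_k(d_2) + 1 then d_2 is preferred over d_1 by the fixed tie-breaking order. -/

import Mathlib

open Finset
open scoped Classical

variable {O : Type*} [Fintype O] [DecidableEq O]

/-- A vote is a strict total order on the outcome set `O`, represented by its position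
function: `p o` is the number of outcomes that `o` is preferred over, so the most
preferred outcome has position `m - 1` and the least preferred position `0`. -/
def IsVote (p : O → ℕ) : Prop :=
  Function.Injective p ∧ ∀ o : O, p o < Fintype.card O

/-- The total score of candidate `c` under the scoring vector `sc` (`sc j` is the number
of points awarded to the candidate at position `j`) for the profile `P`. -/
def score (sc : ℕ → ℤ) (P : List (O → ℕ)) (c : O) : ℤ :=
  (P.map fun q => sc (q c)).sum

/-- The positional scoring rule used as a social welfare function: candidates are ordered
by decreasing total score, ties being broken by the fixed strict tie-breaking order `tb`
(a smaller `tb`-value means preferred by the tie-breaking order).  The output is again a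
position function: the position of `c` is the number of candidates ranked below `c`. -/
def swf (sc : ℕ → ℤ) (tb : O → ℕ) (P : List (O → ℕ)) : O → ℕ := fun c =>
  (univ.filter fun c' =>
      score sc P c' < score sc P c ∨ (score sc P c' = score sc P c ∧ tb c < tb c')).card

/-- `topSet p j = A^j(p)`, the set of the `j` most preferred outcomes of `p`. -/
def topSet (p : O → ℕ) (j : ℕ) : Finset O :=
  univ.filter fun o => Fintype.card O - j ≤ p o

/-- The least `j ≥ 1` for which `A^j(p_t) ∩ A^j(p_o)` is nonempty, i.e. the iteration at
which the Rational Compromise rule terminates. -/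
noncomputable def rcIndex (pt po : O → ℕ) : ℕ :=
  sInf {j | 1 ≤ j ∧ (topSet pt j ∩ topSet po j).Nonempty}

/-- The Rational Compromise bargaining rule: `A^j(p_t) ∩ A^j(p_o)` for the least `j ≥ 1`
making this intersection nonempty. -/
noncomputable def RC (pt po : O → ℕ) : Finset O :=
  topSet pt (rcIndex pt po) ∩ topSet po (rcIndex pt po)

/-- The `n` most preferred members of `S` according to the ranking `r`. -/
def topWithin (r : O → ℕ) (S : Finset O) (n : ℕ) : Finset O :=
  S.filter fun o => (S.filter fun o' => r o < r o').card < n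

/-- The `n` least preferred members of `S` according to the ranking `r`. -/
def botWithin (r : O → ℕ) (S : Finset O) (n : ℕ) : Finset O :=
  S.filter fun o => (S.filter fun o' => r o' < r o).card < n

/-- The vote built by the algorithms from a current ranking `r` and a set `H`:
the members of `H` occupy the `|H|` highest positions in reverse order of `r`
(the `r`-least preferred member of `H` is placed highest), and the members of `O ∖ H`
occupy the remaining lowest positions in reverse order of `r` (the `r`-most preferred
of them is placed lowest). -/
def buildVote (r : O → ℕ) (H : Finset O) : O → ℕ := fun o =>
  if o ∈ H then Fintype.card O - H.card + (H.filter fun h => r o < r h).card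
  else (univ.filter fun c => c ∉ H ∧ r o < r c).card

/-- `H^i` for the constructive algorithms: the preferred outcome `p` together with the
`i - 1` most preferred outcomes of `p_t` that do not belong to `A^i(p_o)`. -/
def Hset (pt po : O → ℕ) (p : O) (i : ℕ) : Finset O :=
  insert p (topWithin pt ((univ \ topSet po i).erase p) (i - 1))

/-- `H^i` for the destructive algorithms: `p*`, the most preferred outcome of `p_t` other
than `e` that belongs to `A^i(p_o)`, together with the `i - 1` most preferred outcomes of
`p_t` other than `e` and `p*`. -/
def HsetD (pt po : O → ℕ) (e : O) (i : ℕ) : Finset O :=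
  topWithin pt ((topSet po i).erase e) 1 ∪
    topWithin pt ((univ.erase e) \ topWithin pt ((topSet po i).erase e) 1) (i - 1)

/-- The manipulator profile built by Algorithm 2 (for a fixed iteration whose set is `H`)
after the given number of stages: at each stage one more vote is appended, built from the
current social ranking `F(p⃗ ∪ p⃗_M)`. -/
def stageProfile (sc : ℕ → ℤ) (tb : O → ℕ) (P : List (O → ℕ)) (H : Finset O) :
    ℕ → List (O → ℕ)
  | 0 => []
  | n + 1 =>
      stageProfile sc tb P H n ++
        [buildVote (swf sc tb (P ++ stageProfile sc tb P H n)) H]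

/-- The vote constructed by Algorithm 2 at stage `ℓ` (1-indexed). -/
def stageVote (sc : ℕ → ℤ) (tb : O → ℕ) (P : List (O → ℕ)) (H : Finset O) (ℓ : ℕ) :
    O → ℕ :=
  buildVote (swf sc tb (P ++ stageProfile sc tb P H (ℓ - 1))) H

/-- The sets `U^i_s`:  `U^i_0` consists of the member of `H^i` with the lowest position in
`p_t`, and `U^i_{s+1}` adds every candidate ranked above some member of `U^i_s` by the
stage-`l` vote (`1 ≤ l < k`) but below some member of `U^i_s` by the stage-`(l+1)` vote. -/
noncomputable def Uaux (sc : ℕ → ℤ) (tb : O → ℕ) (P : List (O → ℕ)) (pt : O → ℕ)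
    (H : Finset O) (k : ℕ) : ℕ → Finset O
  | 0 => botWithin pt H 1
  | s + 1 =>
      Uaux sc tb P pt H k s ∪
        univ.filter fun u =>
          ∃ l, 1 ≤ l ∧ l < k ∧
            (∃ u' ∈ Uaux sc tb P pt H k s,
              stageVote sc tb P H l u' < stageVote sc tb P H l u) ∧
            (∃ u' ∈ Uaux sc tb P pt H k s,
              stageVote sc tb P H (l + 1) u < stageVote sc tb P H (l + 1) u')

/-- `U^i = ⋃ₛ U^i_s`. -/
noncomputable def Uset (sc : ℕ → ℤ) (tb : O → ℕ) (P : List (O → ℕ)) (pt : O → ℕ)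
    (H : Finset O) (k : ℕ) : Finset O :=
  univ.filter fun u => ∃ s, u ∈ Uaux sc tb P pt H k s

/-- The sets `D^i_s`: `D^i_0` consists of the member of `O ∖ H^i` with the highest position
in `p_t`, and `D^i_{s+1}` adds every candidate ranked below some member of `D^i_s` by the
stage-`l` vote (`1 ≤ l < k`) but above some member of `D^i_s` by the stage-`(l+1)` vote. -/
noncomputable def Daux (sc : ℕ → ℤ) (tb : O → ℕ) (P : List (O → ℕ)) (pt : O → ℕ)
    (H : Finset O) (k : ℕ) : ℕ → Finset O
  | 0 => topWithin pt (univ \ H) 1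
  | s + 1 =>
      Daux sc tb P pt H k s ∪
        univ.filter fun d =>
          ∃ l, 1 ≤ l ∧ l < k ∧
            (∃ d' ∈ Daux sc tb P pt H k s,
              stageVote sc tb P H l d < stageVote sc tb P H l d') ∧
            (∃ d' ∈ Daux sc tb P pt H k s,
              stageVote sc tb P H (l + 1) d' < stageVote sc tb P H (l + 1) d)

/-- `D^i = ⋃ₛ D^i_s`. -/
noncomputable def Dset (sc : ℕ → ℤ) (tb : O → ℕ) (P : List (O → ℕ)) (pt : O → ℕ)
    (H : Finset O) (k : ℕ) : Finset O :=
  univ.filter fun d => ∃ s, d ∈ Daux sc tb P pt H k s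

/-- The Borda scoring vector `(m-1, m-2, …, 1, 0)`: position `j` gets `j` points. -/
def bordaVec : ℕ → ℤ := fun j => (j : ℤ)

/-- The `x`-approval scoring vector for `m` candidates: the `x` highest positions get one
point, the rest get zero. -/
def approvalVec (m x : ℕ) : ℕ → ℤ := fun j => if m ≤ j + x then 1 else 0

/-- `sc` is a scoring vector for `m` candidates: `s_{m-1} ≥ … ≥ s_0 ≥ 0` and
`s_{m-1} > s_0`. -/
def IsScoringVector (m : ℕ) (sc : ℕ → ℤ) : Prop :=
  (∀ j, j + 1 < m → sc j ≤ sc (j + 1)) ∧ 0 ≤ sc 0 ∧ sc 0 < sc (m - 1)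

/-- Algorithm 1 (constructive single-voter manipulation) returns the vote `pa`:
the guard `pos(p, p_o) ≥ ⌈m/2⌉` holds and `pa` is the vote built at the first iteration
`i ∈ {1, …, ⌈m/2⌉}` at which the manipulation check succeeds. -/
def alg1Returns (sc : ℕ → ℤ) (tb : O → ℕ) (P : List (O → ℕ)) (po : O → ℕ) (p : O)
    (pa : O → ℕ) : Prop :=
  (Fintype.card O + 1) / 2 ≤ po p ∧
    ∃ i, 1 ≤ i ∧ i ≤ (Fintype.card O + 1) / 2 ∧
      pa = buildVote (swf sc tb P) (Hset (swf sc tb P) po p i) ∧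
      RC (swf sc tb (P ++ [pa])) po = {p} ∧
      ∀ j, 1 ≤ j → j < i →
        RC (swf sc tb (P ++ [buildVote (swf sc tb P) (Hset (swf sc tb P) po p j)])) po ≠
          {p}

/-- Algorithm 2 (constructive coalitional manipulation) run with `k` manipulators returns
the profile `PM`: the guard `pos(p, p_o) ≥ ⌈m/2⌉` holds and `PM` is the `k`-stage profile
built at the first iteration `i ∈ {1, …, ⌈m/2⌉}` at which the manipulation check succeeds. -/
def alg2Returns (sc : ℕ → ℤ) (tb : O → ℕ) (P : List (O → ℕ)) (po : O → ℕ) (p : O)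
    (k : ℕ) (PM : List (O → ℕ)) : Prop :=
  (Fintype.card O + 1) / 2 ≤ po p ∧
    ∃ i, 1 ≤ i ∧ i ≤ (Fintype.card O + 1) / 2 ∧
      PM = stageProfile sc tb P (Hset (swf sc tb P) po p i) k ∧
      RC (swf sc tb (P ++ PM)) po = {p} ∧
      ∀ j, 1 ≤ j → j < i →
        RC (swf sc tb (P ++ stageProfile sc tb P (Hset (swf sc tb P) po p j) k)) po ≠ {p}

/-- The modified Algorithm 1 (destructive single-voter manipulation) returns the vote
`pa`: the guard `pos(e, p_o) < ⌊m/2⌋` fails and `pa` is the vote built at the first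
iteration `i ∈ {1, …, ⌈m/2⌉}` at which `e` is excluded from the Rational Compromise. -/
def alg1ReturnsD (sc : ℕ → ℤ) (tb : O → ℕ) (P : List (O → ℕ)) (po : O → ℕ) (e : O)
    (pa : O → ℕ) : Prop :=
  Fintype.card O / 2 ≤ po e ∧
    ∃ i, 1 ≤ i ∧ i ≤ (Fintype.card O + 1) / 2 ∧
      pa = buildVote (swf sc tb P) (HsetD (swf sc tb P) po e i) ∧
      e ∉ RC (swf sc tb (P ++ [pa])) po ∧
      ∀ j, 1 ≤ j → j < i →
        e ∈ RC (swf sc tb (P ++ [buildVote (swf sc tb P) (HsetD (swf sc tb P) po e j)])) po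

/-- The modified Algorithm 2 (destructive coalitional manipulation) run with `k`
manipulators returns the profile `PM`: the guard `pos(e, p_o) < ⌊m/2⌋` fails and `PM` is
the `k`-stage profile built at the first iteration `i ∈ {1, …, ⌈m/2⌉}` at which `e` is
excluded from the Rational Compromise. -/
def alg2ReturnsD (sc : ℕ → ℤ) (tb : O → ℕ) (P : List (O → ℕ)) (po : O → ℕ) (e : O)
    (k : ℕ) (PM : List (O → ℕ)) : Prop :=
  Fintype.card O / 2 ≤ po e ∧
    ∃ i, 1 ≤ i ∧ i ≤ (Fintype.card O + 1) / 2 ∧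
      PM = stageProfile sc tb P (HsetD (swf sc tb P) po e i) k ∧
      e ∉ RC (swf sc tb (P ++ PM)) po ∧
      ∀ j, 1 ≤ j → j < i →
        e ∈ RC (swf sc tb (P ++ stageProfile sc tb P (HsetD (swf sc tb P) po e j) k)) po

/-- The set `U^i` arising from running the `k` stages of Algorithm 2 at iteration `i`. -/
noncomputable def UsetAlg (sc : ℕ → ℤ) (tb : O → ℕ) (P : List (O → ℕ)) (po : O → ℕ)
    (p : O) (i k : ℕ) : Finset O :=
  Uset sc tb P (swf sc tb P) (Hset (swf sc tb P) po p i) k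

/-- The set `D^i` arising from running the `k` stages of Algorithm 2 at iteration `i`. -/
noncomputable def DsetAlg (sc : ℕ → ℤ) (tb : O → ℕ) (P : List (O → ℕ)) (po : O → ℕ)
    (p : O) (i k : ℕ) : Finset O :=
  Dset sc tb P (swf sc tb P) (Hset (swf sc tb P) po p i) k

/-- The vote constructed at stage `ℓ` of iteration `i` of Algorithm 2. -/
def stageVoteAlg (sc : ℕ → ℤ) (tb : O → ℕ) (P : List (O → ℕ)) (po : O → ℕ)
    (p : O) (i ℓ : ℕ) : O → ℕ :=
  stageVote sc tb P (Hset (swf sc tb P) po p i) ℓ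

/-- `s_ℓ(c)`: the total score of candidate `c` in `F(p⃗ ∪ p⃗_M)` after stage `ℓ` of
iteration `i` of Algorithm 2. -/
def stageScoreAlg (sc : ℕ → ℤ) (tb : O → ℕ) (P : List (O → ℕ)) (po : O → ℕ)
    (p : O) (i ℓ : ℕ) (c : O) : ℤ :=
  score sc (P ++ stageProfile sc tb P (Hset (swf sc tb P) po p i) ℓ) c

/-- `F(p⃗ ∪ p⃗_M)` after stage `ℓ` of iteration `i` of Algorithm 2. -/
def stageSwfAlg (sc : ℕ → ℤ) (tb : O → ℕ) (P : List (O → ℕ)) (po : O → ℕ)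
    (p : O) (i ℓ : ℕ) : O → ℕ :=
  swf sc tb (P ++ stageProfile sc tb P (Hset (swf sc tb P) po p i) ℓ)

/-!
Fix `S = H` or `S = O ∖ H`. Comparing the pairs (score, tie-breaking rank) lexicographically is
comparing candidates in the social ranking, and each stage adds one point to a fixed number of
lowest-ranked members of `S`, the set `L t`. Call a member of `S` trailing after stage `t` if it is
still below everything outside `L t`, and leading if it is already above everything in `L t`. Since
`L t` has constant size, a trailing candidate has always been trailing and a leading one has always
been leading. Hence neither kind ever changed its order relative to the rest of `S`, nor relative to
its own kind, so the sets `U` and `D` are either singletons or avoid both kinds. Finally,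
if `a` is not leading and `b` is not trailing, then `a` is at most some `d ∈ L t`, and `b` at least
some `e ∉ L t`; as `d` was below `e` before the stage, `a` ranks below `b` with one extra point.
-/

section Dynamics

variable {α β : Type*} [LinearOrder β] {φ : β → β} {S : Set α} {L : ℕ → Finset α}
  {K : ℕ → α → β} {k t t' : ℕ} {a b : α}

/-- The dynamics of one block of candidates: at step `t` the set `L t`, which consists of the lowest
members of `S` with respect to `K t` and whose size does not depend on `t`, has its values raised by
`φ`, while the other members of `S` keep theirs. -/
structure LiftsLowest (φ : β → β) (S : Set α) (L : ℕ → Finset α) (K : ℕ → α → β) : Prop where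
  subset : ∀ t, ↑(L t) ⊆ S
  card_succ : ∀ t, #(L (t + 1)) = #(L t)
  lt : ∀ t, ∀ a ∈ L t, ∀ b ∈ S, b ∉ L t → K t a < K t b
  lift : ∀ t, ∀ a ∈ L t, K (t + 1) a = φ (K t a)
  keep : ∀ t, ∀ a ∈ S, a ∉ L t → K (t + 1) a = K t a

/-- After step `t`, the element `a` is still below everything in `S` that was not lifted. For
`a ∈ S` this forces `a ∈ L t`. -/
def IsTrailing (S : Set α) (L : ℕ → Finset α) (K : ℕ → α → β) (t : ℕ) (a : α) : Prop :=
  ∀ b ∈ S, b ∉ L t → K (t + 1) a < K (t + 1) b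

/-- After step `t`, the element `a` is still above everything that was lifted. This forces
`a ∉ L t`. -/
def IsLeading (L : ℕ → Finset α) (K : ℕ → α → β) (t : ℕ) (a : α) : Prop :=
  ∀ b ∈ L t, K (t + 1) b < K (t + 1) a

/-- Every element of `S` that up to time `k` is at some moment below a member of `W` and at some
moment above a member of `W` belongs to `W`. Both the growth rule of the sets `U^i_s` and that of
the sets `D^i_s` add only elements of this kind. -/
def OvertakingClosed (S : Set α) (K : ℕ → α → β) (k : ℕ) (W : Set α) : Prop :=
  ∀ a ∈ S, ∀ b ∈ W, ∀ c ∈ W, ∀ t ≤ k, ∀ t' ≤ k, K t a < K t b → K t' c < K t' a → a ∈ W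

lemma IsTrailing.mem (h : IsTrailing S L K t a) (ha : a ∈ S) : a ∈ L t :=
  by_contra fun haL => lt_irrefl _ (h a ha haL)

lemma IsLeading.notMem (h : IsLeading L K t a) : a ∉ L t :=
  fun haL => lt_irrefl _ (h a haL)

lemma exists_mem_notMem_of_card_le {s u : Finset α} (hcard : #s ≤ #u) {d : α} (hd : d ∈ s)
    (hdu : d ∉ u) : ∃ e ∈ u, e ∉ s := by
  by_contra! hsub
  exact hdu (eq_of_subset_of_card_le hsub hcard ▸ hd)

namespace LiftsLowest

lemma mem_of_le (h : LiftsLowest φ S L K) (ha : a ∈ S) (hb : b ∈ L t) (hab : K t a ≤ K t b) :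
    a ∈ L t :=
  by_contra fun haL => hab.not_gt (h.lt t b hb a ha haL)

lemma isTrailing_of_succ (h : LiftsLowest φ S L K) (hφ : StrictMono φ) (ha : a ∈ S)
    (hlow : IsTrailing S L K (t + 1) a) : IsTrailing S L K t a := by
  intro d hdS hd
  by_contra! hda
  have hd' : d ∈ L (t + 1) := h.mem_of_le hdS (hlow.mem ha) hda
  obtain ⟨e, he, he'⟩ := exists_mem_notMem_of_card_le (h.card_succ t).le hd' hd
  have heS : e ∈ S := h.subset t he
  refine (hlow e heS he').not_gt ?_
  calc K (t + 2) e = φ (K t e) := by rw [h.keep _ e heS he', h.lift t e he]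
    _ < φ (K t d) := hφ (h.lt t e he d hdS hd)
    _ ≤ φ (K (t + 1) a) := hφ.monotone (h.keep t d hdS hd ▸ hda)
    _ = K (t + 2) a := (h.lift _ a (hlow.mem ha)).symm

lemma isLeading_of_succ (h : LiftsLowest φ S L K) (hφ : StrictMono φ) (ha : a ∈ S)
    (hhigh : IsLeading L K (t + 1) a) : IsLeading L K t a := by
  intro d hd
  by_contra! had
  have hd' : d ∉ L (t + 1) := fun hd' => hhigh.notMem (h.mem_of_le ha hd' had)
  obtain ⟨e, he', he⟩ := exists_mem_notMem_of_card_le (h.card_succ t).ge hd hd'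
  have heS : e ∈ S := h.subset _ he'
  refine (hhigh e he').not_gt ?_
  calc K (t + 2) a = K (t + 1) a := h.keep _ a ha hhigh.notMem
    _ ≤ φ (K t d) := h.lift t d hd ▸ had
    _ < φ (K t e) := hφ (h.lt t d hd e heS he)
    _ = K (t + 2) e := by rw [h.lift _ e he', h.keep t e heS he]

lemma isTrailing_of_le (h : LiftsLowest φ S L K) (hφ : StrictMono φ) (ha : a ∈ S) (htt' : t ≤ t')
    (hlow : IsTrailing S L K t' a) : IsTrailing S L K t a := by
  induction htt' using Nat.decreasingInduction with
  | self => exact hlow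
  | of_succ t _ ih => exact h.isTrailing_of_succ hφ ha ih

lemma isLeading_of_le (h : LiftsLowest φ S L K) (hφ : StrictMono φ) (ha : a ∈ S) (htt' : t ≤ t')
    (hhigh : IsLeading L K t' a) : IsLeading L K t a := by
  induction htt' using Nat.decreasingInduction with
  | self => exact hhigh
  | of_succ t _ ih => exact h.isLeading_of_succ hφ ha ih

lemma lt_of_isTrailing (h : LiftsLowest φ S L K) (hφ : StrictMono φ) (ha : a ∈ S) (hb : b ∈ S)
    (hlow : IsTrailing S L K k a) (hbl : ¬IsTrailing S L K k b) (ht : t ≤ k + 1) :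
    K t a < K t b := by
  induction ht using Nat.decreasingInduction with
  | self =>
    simp only [IsTrailing, not_forall, not_lt] at hbl
    obtain ⟨e, heS, he, heb⟩ := hbl
    exact (hlow e heS he).trans_le heb
  | of_succ t ht ih =>
    have haL : a ∈ L t := (h.isTrailing_of_le hφ ha (Nat.le_of_lt_succ ht) hlow).mem ha
    by_contra! hba
    rw [h.lift t a haL, h.lift t b (h.mem_of_le hb haL hba)] at ih
    exact ih.not_ge (hφ.monotone hba)

lemma lt_of_isLeading (h : LiftsLowest φ S L K) (hφ : StrictMono φ) (ha : a ∈ S) (hb : b ∈ S)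
    (hhigh : IsLeading L K k a) (hbh : ¬IsLeading L K k b) (ht : t ≤ k + 1) :
    K t b < K t a := by
  induction ht using Nat.decreasingInduction with
  | self =>
    simp only [IsLeading, not_forall, not_lt] at hbh
    obtain ⟨d, hd, hbd⟩ := hbh
    exact hbd.trans_lt (hhigh d hd)
  | of_succ t ht ih =>
    have haL : a ∉ L t := (h.isLeading_of_le hφ ha (Nat.le_of_lt_succ ht) hhigh).notMem
    by_contra! hab
    rw [h.keep t a ha haL, h.keep t b hb fun hbL => haL (h.mem_of_le ha hbL hab)] at ih
    exact ih.not_ge hab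

lemma lt_iff_lt_zero (h : LiftsLowest φ S L K) (hφ : StrictMono φ) (ha : a ∈ S) (hb : b ∈ S)
    (hab : ∀ t < k, a ∈ L t ↔ b ∈ L t) (ht : t ≤ k) : K t a < K t b ↔ K 0 a < K 0 b := by
  induction t with
  | zero => rfl
  | succ t ih =>
    rw [← ih (by lia)]
    by_cases haL : a ∈ L t
    · rw [h.lift t a haL, h.lift t b ((hab t ht).1 haL), hφ.lt_iff_lt]
    · rw [h.keep t a ha haL, h.keep t b hb (mt (hab t ht).2 haL)]

lemma overtakingClosed_singleton_of_isTrailing (h : LiftsLowest φ S L K) (hφ : StrictMono φ)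
    (ha : a ∈ S) (hlow : IsTrailing S L K k a) : OvertakingClosed S K (k + 1) {a} := by
  rintro b hb _ rfl _ rfl t ht t' ht' hlt hgt
  by_cases hbl : IsTrailing S L K k b
  · have hmem : ∀ s < k + 1, b ∈ L s ↔ _ ∈ L s := fun s hs => iff_of_true
      ((h.isTrailing_of_le hφ hb (Nat.le_of_lt_succ hs) hbl).mem hb)
      ((h.isTrailing_of_le hφ ha (Nat.le_of_lt_succ hs) hlow).mem ha)
    rw [h.lt_iff_lt_zero hφ hb ha hmem ht] at hlt
    rw [h.lt_iff_lt_zero hφ ha hb (fun s hs => (hmem s hs).symm) ht'] at hgt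
    exact absurd hlt hgt.not_gt
  · exact absurd hlt (h.lt_of_isTrailing hφ ha hb hlow hbl ht).not_gt

lemma overtakingClosed_singleton_of_isLeading (h : LiftsLowest φ S L K) (hφ : StrictMono φ)
    (ha : a ∈ S) (hhigh : IsLeading L K k a) : OvertakingClosed S K (k + 1) {a} := by
  rintro b hb _ rfl _ rfl t ht t' ht' hlt hgt
  by_cases hbh : IsLeading L K k b
  · have hmem : ∀ s < k + 1, b ∈ L s ↔ _ ∈ L s := fun s hs => iff_of_false
      (h.isLeading_of_le hφ hb (Nat.le_of_lt_succ hs) hbh).notMem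
      (h.isLeading_of_le hφ ha (Nat.le_of_lt_succ hs) hhigh).notMem
    rw [h.lt_iff_lt_zero hφ hb ha hmem ht] at hlt
    rw [h.lt_iff_lt_zero hφ ha hb (fun s hs => (hmem s hs).symm) ht'] at hgt
    exact absurd hlt hgt.not_gt
  · exact absurd hgt (h.lt_of_isLeading hφ ha hb hhigh hbh ht').not_gt

lemma overtakingClosed_setOf_not_isTrailing_not_isLeading (h : LiftsLowest φ S L K)
    (hφ : StrictMono φ) (k : ℕ) :
    OvertakingClosed S K (k + 1) {a | a ∈ S ∧ ¬IsTrailing S L K k a ∧ ¬IsLeading L K k a} := by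
  rintro a ha b ⟨hb, -, hbh⟩ c ⟨hc, hcl, -⟩ t ht t' ht' hlt hgt
  exact ⟨ha, fun hlow => hgt.not_gt (h.lt_of_isTrailing hφ ha hc hlow hcl ht'),
    fun hhigh => hlt.not_gt (h.lt_of_isLeading hφ ha hb hhigh hbh ht)⟩

lemma lt_of_not_isLeading_of_not_isTrailing (h : LiftsLowest φ S L K) (hφ : StrictMono φ)
    (ha : ¬IsLeading L K t a) (hb : ¬IsTrailing S L K t b) : K (t + 1) a < φ (K (t + 1) b) := by
  simp only [IsLeading, IsTrailing, not_forall, not_lt] at ha hb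
  obtain ⟨d, hd, had⟩ := ha
  obtain ⟨e, heS, he, heb⟩ := hb
  calc K (t + 1) a ≤ φ (K t d) := h.lift t d hd ▸ had
    _ < φ (K t e) := hφ (h.lt t d hd e heS he)
    _ ≤ φ (K (t + 1) b) := hφ.monotone (h.keep t e heS he ▸ heb)

theorem exists_overtakingClosed (h : LiftsLowest φ S L K) (hφ : StrictMono φ)
    (hlt : ∀ g, g < φ g) (k : ℕ) {A : Set α} (hAS : A ⊆ S) (hA : A.Subsingleton) :
    ∃ W : Set α, A ⊆ W ∧ W ⊆ S ∧ OvertakingClosed S K k W ∧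
      ∀ a ∈ W, ∀ b ∈ W, K k a < φ (K k b) := by
  have hAlt : ∀ a ∈ A, ∀ b ∈ A, K k a < φ (K k b) := fun a ha b hb => hA ha hb ▸ hlt _
  obtain rfl | ⟨a, rfl⟩ := hA.eq_empty_or_singleton
  · exact ⟨∅, subset_rfl, hAS, fun _ _ _ hb => hb.elim, hAlt⟩
  have ha : a ∈ S := hAS rfl
  obtain _ | k := k
  · refine ⟨{a}, subset_rfl, hAS, ?_, hAlt⟩
    rintro b - _ rfl _ rfl t ht t' ht' hba hab
    rw [Nat.le_zero.1 ht] at hba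
    rw [Nat.le_zero.1 ht'] at hab
    exact absurd hba hab.not_gt
  by_cases hlow : IsTrailing S L K k a
  · exact ⟨{a}, subset_rfl, hAS, h.overtakingClosed_singleton_of_isTrailing hφ ha hlow, hAlt⟩
  by_cases hhigh : IsLeading L K k a
  · exact ⟨{a}, subset_rfl, hAS, h.overtakingClosed_singleton_of_isLeading hφ ha hhigh, hAlt⟩
  refine ⟨_, ?_, ?_, h.overtakingClosed_setOf_not_isTrailing_not_isLeading hφ k, ?_⟩
  · exact Set.singleton_subset_iff.2 ⟨ha, hlow, hhigh⟩
  · exact fun b hb => hb.1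
  · exact fun b hb c hc => h.lt_of_not_isLeading_of_not_isTrailing hφ hb.2.2 hc.2.1

end LiftsLowest

end Dynamics

section Rank

variable {α β : Type*} [LinearOrder β] {f : α → β} {s : Finset α} {a b : α}

/-- The rank of `a` in `s` with respect to `f`: the number of members of `s` with a smaller value.
Ranks start at `0`, and ranks from the top are ranks with respect to `toDual ∘ f`. -/
def rankIn (f : α → β) (s : Finset α) (a : α) : ℕ := #{b ∈ s | f b < f a}

lemma rankIn_lt_iff (ha : a ∈ s) : rankIn f s a < rankIn f s b ↔ f a < f b := by
  refine ⟨fun hlt => ?_, fun hlt => card_lt_card ?_⟩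
  · by_contra! hba
    exact hlt.not_ge (card_le_card (monotone_filter_right s fun _ _ hc => hc.trans_le hba))
  · refine (ssubset_iff_of_subset (monotone_filter_right s fun _ _ hc => hc.trans hlt)).2 ⟨a, ?_⟩
    simp [ha, hlt]

lemma rankIn_lt_card (ha : a ∈ s) : rankIn f s a < #s :=
  card_lt_card (filter_ssubset.2 ⟨a, ha, lt_irrefl _⟩)

lemma injOn_rankIn (hf : Set.InjOn f s) : Set.InjOn (rankIn f s) s := by
  intro a ha b hb hab
  exact hf ha hb (le_antisymm (not_lt.1 ((rankIn_lt_iff hb).not.1 hab.not_gt))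
    (not_lt.1 ((rankIn_lt_iff ha).not.1 hab.not_lt)))

lemma image_rankIn (hf : Set.InjOn f s) : s.image (rankIn f s) = range #s := by
  refine eq_of_subset_of_card_le (image_subset_iff.2 fun a ha => mem_range.2 (rankIn_lt_card ha)) ?_
  rw [card_range, card_image_of_injOn (injOn_rankIn hf)]

lemma card_filter_rankIn_lt (hf : Set.InjOn f s) (n : ℕ) :
    #{a ∈ s | rankIn f s a < n} = min n #s := by
  have hinj : Set.InjOn (rankIn f s) ↑{a ∈ s | rankIn f s a < n} :=
    (injOn_rankIn hf).mono (coe_subset.2 (filter_subset _ s))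
  calc #{a ∈ s | rankIn f s a < n}
      = #({a ∈ s | rankIn f s a < n}.image (rankIn f s)) := (card_image_of_injOn hinj).symm
    _ = #{j ∈ range #s | j < n} := by rw [← image_rankIn hf, filter_image]
    _ = #(range (min n #s)) := by
      congr 1
      ext j
      simp only [mem_filter, mem_range, lt_inf_iff, and_comm]
    _ = min n #s := card_range _

lemma rankIn_add_rankIn_toDual (hf : Set.InjOn f s) (ha : a ∈ s) :
    rankIn f s a + rankIn (OrderDual.toDual ∘ f) s a + 1 = #s := by
  have hge : {b ∈ s | ¬f b < f a} = insert a {b ∈ s | f a < f b} := by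
    ext b
    simp only [mem_filter, mem_insert, not_lt, le_iff_eq_or_lt, and_or_left]
    refine or_congr_left ⟨fun hb => (hf ha hb.1 hb.2).symm, ?_⟩
    rintro rfl
    exact ⟨ha, rfl⟩
  rw [← card_filter_add_card_filter_not (s := s) (fun b => f b < f a), hge,
    card_insert_of_notMem (by simp)]
  rfl

end Rank

section Ranking

variable {α : Type*} {sc : ℕ → ℤ} {tb : α → ℕ} {P : List (α → ℕ)} {a b : α}

/-- The pair (score, tie-breaking rank) by which the social welfare function orders candidates. The
second component is dual because a smaller `tb`-value is preferred. -/
def rankKey (sc : ℕ → ℤ) (tb : α → ℕ) (P : List (α → ℕ)) (c : α) : ℤ ×ₗ ℕᵒᵈ :=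
  toLex (score sc P c, OrderDual.toDual (tb c))

/-- The effect on a key of one additional point. -/
def addPoint (g : ℤ ×ₗ ℕᵒᵈ) : ℤ ×ₗ ℕᵒᵈ :=
  toLex ((ofLex g).1 + 1, (ofLex g).2)

lemma lt_addPoint (g : ℤ ×ₗ ℕᵒᵈ) : g < addPoint g :=
  Prod.Lex.lt_iff.2 (Or.inl (lt_add_one _))

lemma strictMono_addPoint : StrictMono addPoint := by
  intro g g' hlt
  simpa [addPoint, Prod.Lex.lt_iff] using hlt

lemma rankKey_injective (htb : Function.Injective tb) : Function.Injective (rankKey sc tb P) :=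
  fun _ _ hab => htb (congrArg (fun g => OrderDual.ofDual (ofLex g).2) hab)

lemma tb_lt_of_rankKey_lt_addPoint (hkey : rankKey sc tb P a < addPoint (rankKey sc tb P b))
    (hscore : score sc P a = score sc P b + 1) : tb b < tb a := by
  simpa [rankKey, addPoint, Prod.Lex.lt_iff, hscore] using hkey

variable [Fintype α]

lemma swf_eq_rankIn : swf sc tb P = rankIn (rankKey sc tb P) univ := by
  ext c
  simp [swf, rankIn, rankKey, Prod.Lex.lt_iff]

lemma swf_lt_iff : swf sc tb P a < swf sc tb P b ↔ rankKey sc tb P a < rankKey sc tb P b := by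
  rw [swf_eq_rankIn, rankIn_lt_iff (mem_univ a)]

lemma swf_injective (htb : Function.Injective tb) : Function.Injective (swf sc tb P) := by
  rw [swf_eq_rankIn, ← Set.injOn_univ, ← coe_univ]
  exact injOn_rankIn (rankKey_injective htb).injOn

end Ranking

section Within

variable {α : Type*} {r : α → ℕ} {S : Finset α} {n : ℕ} {a b : α}

lemma mem_botWithin : a ∈ botWithin r S n ↔ a ∈ S ∧ rankIn r S a < n :=
  mem_filter

lemma lt_of_mem_botWithin_of_notMem (ha : a ∈ botWithin r S n) (hbS : b ∈ S)
    (hb : b ∉ botWithin r S n) : r a < r b := by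
  rw [mem_botWithin] at ha hb
  exact (rankIn_lt_iff ha.1).1 (ha.2.trans_le (not_lt.1 (not_and.1 hb hbS)))

lemma card_botWithin (hr : Function.Injective r) (S : Finset α) (n : ℕ) :
    #(botWithin r S n) = min n #S :=
  card_filter_rankIn_lt hr.injOn n

lemma card_topWithin (hr : Function.Injective r) (S : Finset α) (n : ℕ) :
    #(topWithin r S n) = min n #S :=
  card_filter_rankIn_lt (OrderDual.toDual.injective.comp hr).injOn n

end Within

section BuildVote

variable {r : O → ℕ} {H : Finset O} {a b o : O}

lemma buildVote_of_mem (ho : o ∈ H) :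
    buildVote r H o = #Hᶜ + rankIn (OrderDual.toDual ∘ r) H o := by
  rw [buildVote, if_pos ho, card_compl]
  rfl

lemma buildVote_of_notMem (ho : o ∉ H) :
    buildVote r H o = rankIn (OrderDual.toDual ∘ r) Hᶜ o := by
  rw [buildVote, if_neg ho, rankIn]
  congr 1
  ext c
  simp

lemma buildVote_lt_of_notMem_of_mem (ha : a ∉ H) (hb : b ∈ H) :
    buildVote r H a < buildVote r H b := by
  rw [buildVote_of_notMem ha, buildVote_of_mem hb]
  exact (rankIn_lt_card (mem_compl.2 ha)).trans_le (Nat.le_add_right _ _)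

lemma buildVote_lt_iff (hab : a ∈ H ↔ b ∈ H) : buildVote r H a < buildVote r H b ↔ r b < r a := by
  by_cases ha : a ∈ H
  · rw [buildVote_of_mem ha, buildVote_of_mem (hab.1 ha), add_lt_add_iff_left, rankIn_lt_iff ha]
    rfl
  · rw [buildVote_of_notMem ha, buildVote_of_notMem (mt hab.2 ha), rankIn_lt_iff (mem_compl.2 ha)]
    rfl

lemma approvalVec_buildVote_of_mem (x : ℕ) (hr : Function.Injective r) (ho : o ∈ H) :
    approvalVec (Fintype.card O) x (buildVote r H o) = if o ∈ botWithin r H x then 1 else 0 := by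
  have hrank := rankIn_add_rankIn_toDual hr.injOn ho
  have hcard := card_add_card_compl H
  refine if_congr ?_ rfl rfl
  rw [mem_botWithin, and_iff_right ho, buildVote_of_mem ho]
  lia

lemma approvalVec_buildVote_of_notMem (x : ℕ) (hr : Function.Injective r) (ho : o ∉ H) :
    approvalVec (Fintype.card O) x (buildVote r H o) =
      if o ∈ botWithin r Hᶜ (x - #H) then 1 else 0 := by
  have hrank := rankIn_add_rankIn_toDual hr.injOn (mem_compl.2 ho)
  have hcard := card_add_card_compl H
  refine if_congr ?_ rfl rfl
  rw [mem_botWithin, and_iff_right (mem_compl.2 ho), buildVote_of_notMem ho]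
  lia

end BuildVote

section Stages

variable {sc : ℕ → ℤ} {tb : O → ℕ} {P : List (O → ℕ)} {pt : O → ℕ} {H S : Finset O}
  {k n t x : ℕ} {a b : O} {W : Set O}

/-- The keys of the candidates in `F(p⃗ ∪ p⃗_M)` after `t` stages of Algorithm 2. -/
def stageKey (sc : ℕ → ℤ) (tb : O → ℕ) (P : List (O → ℕ)) (H : Finset O) (t : ℕ) :
    O → ℤ ×ₗ ℕᵒᵈ :=
  rankKey sc tb (P ++ stageProfile sc tb P H t)

lemma score_stageProfile_succ (c : O) :
    score sc (P ++ stageProfile sc tb P H (t + 1)) c =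
      score sc (P ++ stageProfile sc tb P H t) c +
        sc (buildVote (swf sc tb (P ++ stageProfile sc tb P H t)) H c) := by
  simp [score, stageProfile, add_assoc]

lemma stageVote_succ_lt_iff (hab : a ∈ H ↔ b ∈ H) :
    stageVote sc tb P H (t + 1) a < stageVote sc tb P H (t + 1) b ↔
      stageKey sc tb P H t b < stageKey sc tb P H t a :=
  (buildVote_lt_iff hab).trans swf_lt_iff

lemma liftsLowest_stageKey (htb : Function.Injective tb)
    (hsc : ∀ r : O → ℕ, Function.Injective r → ∀ o ∈ S,
      sc (buildVote r H o) = if o ∈ botWithin r S n then 1 else 0) :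
    LiftsLowest addPoint S
      (fun t => botWithin (swf sc tb (P ++ stageProfile sc tb P H t)) S n)
      (stageKey sc tb P H) where
  subset _ := filter_subset _ S
  card_succ t := by rw [card_botWithin (swf_injective htb), card_botWithin (swf_injective htb)]
  lt t a ha b hbS hb := swf_lt_iff.1 (lt_of_mem_botWithin_of_notMem ha hbS hb)
  lift t a ha := by
    rw [stageKey, rankKey, score_stageProfile_succ,
      hsc _ (swf_injective htb) a (mem_botWithin.1 ha).1, if_pos ha]
    rfl
  keep t a haS ha := by
    rw [stageKey, rankKey, score_stageProfile_succ, hsc _ (swf_injective htb) a haS, if_neg ha,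
      add_zero]
    rfl

lemma Uaux_subset_of_overtakingClosed (hWH : W ⊆ H)
    (hW : OvertakingClosed H (stageKey sc tb P H) k W) (h0 : ↑(botWithin pt H 1) ⊆ W) (s : ℕ) :
    ↑(Uaux sc tb P pt H k s) ⊆ W := by
  induction s with
  | zero => exact h0
  | succ s ih =>
    intro u hu
    simp only [Uaux, coe_union, Set.mem_union, mem_coe, mem_filter] at hu
    obtain hu | ⟨-, l, hl, hlk, ⟨b, hb, hub⟩, ⟨c, hc, huc⟩⟩ := hu
    · exact ih hu
    obtain ⟨l, rfl⟩ := Nat.exists_eq_add_of_le' hl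
    have hbH : b ∈ H := hWH (ih hb)
    have hcH : c ∈ H := hWH (ih hc)
    have huH : u ∈ H := by_contra fun huH => hub.not_gt (buildVote_lt_of_notMem_of_mem huH hbH)
    exact hW u huH b (ih hb) c (ih hc) l (by lia) (l + 1) hlk.le
      ((stageVote_succ_lt_iff (iff_of_true hbH huH)).1 hub)
      ((stageVote_succ_lt_iff (iff_of_true huH hcH)).1 huc)

lemma Daux_subset_of_overtakingClosed (hWH : W ⊆ (Hᶜ : Finset O))
    (hW : OvertakingClosed (Hᶜ : Finset O) (stageKey sc tb P H) k W)
    (h0 : ↑(topWithin pt Hᶜ 1) ⊆ W) (s : ℕ) :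
    ↑(Daux sc tb P pt H k s) ⊆ W := by
  induction s with
  | zero => exact h0
  | succ s ih =>
    intro d hd
    simp only [Daux, coe_union, Set.mem_union, mem_coe, mem_filter] at hd
    obtain hd | ⟨-, l, hl, hlk, ⟨b, hb, hdb⟩, ⟨c, hc, hdc⟩⟩ := hd
    · exact ih hd
    obtain ⟨l, rfl⟩ := Nat.exists_eq_add_of_le' hl
    have hbH : b ∉ H := mem_compl.1 (hWH (ih hb))
    have hcH : c ∉ H := mem_compl.1 (hWH (ih hc))
    have hdH : d ∉ H := fun hdH => hdb.not_gt (buildVote_lt_of_notMem_of_mem hbH hdH)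
    exact hW d (mem_compl.2 hdH) c (ih hc) b (ih hb) (l + 1) hlk.le l (by lia)
      ((stageVote_succ_lt_iff (iff_of_false hcH hdH)).1 hdc)
      ((stageVote_succ_lt_iff (iff_of_false hdH hbH)).1 hdb)

lemma stageKey_lt_addPoint_of_mem_Uset (htb : Function.Injective tb)
    (hpt : Function.Injective pt) (ha : a ∈ Uset (approvalVec (Fintype.card O) x) tb P pt H k)
    (hb : b ∈ Uset (approvalVec (Fintype.card O) x) tb P pt H k) :
    stageKey (approvalVec (Fintype.card O) x) tb P H k a <
      addPoint (stageKey (approvalVec (Fintype.card O) x) tb P H k b) := by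
  have hlift := liftsLowest_stageKey (P := P) htb fun r hr o (ho : o ∈ H) =>
    approvalVec_buildVote_of_mem x hr ho
  have hsub : (botWithin pt H 1 : Set O).Subsingleton :=
    card_le_one_iff_subsingleton.1 ((card_botWithin hpt H 1).trans_le (min_le_left _ _))
  obtain ⟨W, h0, hWH, hW, hlt⟩ := hlift.exists_overtakingClosed strictMono_addPoint lt_addPoint k
    (coe_subset.2 (filter_subset _ H)) hsub
  obtain ⟨s, hs⟩ := (mem_filter.1 ha).2
  obtain ⟨s', hs'⟩ := (mem_filter.1 hb).2
  exact hlt a (Uaux_subset_of_overtakingClosed hWH hW h0 s hs)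
    b (Uaux_subset_of_overtakingClosed hWH hW h0 s' hs')

lemma stageKey_lt_addPoint_of_mem_Dset (htb : Function.Injective tb)
    (hpt : Function.Injective pt) (ha : a ∈ Dset (approvalVec (Fintype.card O) x) tb P pt H k)
    (hb : b ∈ Dset (approvalVec (Fintype.card O) x) tb P pt H k) :
    stageKey (approvalVec (Fintype.card O) x) tb P H k a <
      addPoint (stageKey (approvalVec (Fintype.card O) x) tb P H k b) := by
  have hlift := liftsLowest_stageKey (P := P) htb fun r hr o (ho : o ∈ Hᶜ) =>
    approvalVec_buildVote_of_notMem x hr (mem_compl.1 ho)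
  have hsub : (topWithin pt Hᶜ 1 : Set O).Subsingleton :=
    card_le_one_iff_subsingleton.1 ((card_topWithin hpt Hᶜ 1).trans_le (min_le_left _ _))
  obtain ⟨W, h0, hWH, hW, hlt⟩ := hlift.exists_overtakingClosed strictMono_addPoint lt_addPoint k
    (coe_subset.2 (filter_subset _ Hᶜ)) hsub
  obtain ⟨s, hs⟩ := (mem_filter.1 ha).2
  obtain ⟨s', hs'⟩ := (mem_filter.1 hb).2
  exact hlt a (Daux_subset_of_overtakingClosed hWH hW h0 s hs)
    b (Daux_subset_of_overtakingClosed hWH hW h0 s' hs')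

end Stages

theorem lemma4_tiebreak_general (x : ℕ) {tb : O → ℕ} (htb : Function.Injective tb)
    (P : List (O → ℕ)) {pt : O → ℕ} (hpt : Function.Injective pt) (H : Finset O) (k : ℕ) :
    let sc := approvalVec (Fintype.card O) x
    let finalScore := score sc (P ++ stageProfile sc tb P H k)
    (∀ u₁ ∈ Uset sc tb P pt H k, ∀ u₂ ∈ Uset sc tb P pt H k,
        finalScore u₁ = finalScore u₂ + 1 → tb u₂ < tb u₁) ∧
      ∀ d₁ ∈ Dset sc tb P pt H k, ∀ d₂ ∈ Dset sc tb P pt H k,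
        finalScore d₁ = finalScore d₂ + 1 → tb d₂ < tb d₁ :=
  ⟨fun _ h₁ _ h₂ => tb_lt_of_rankKey_lt_addPoint (stageKey_lt_addPoint_of_mem_Uset htb hpt h₁ h₂),
    fun _ h₁ _ h₂ => tb_lt_of_rankKey_lt_addPoint (stageKey_lt_addPoint_of_mem_Dset htb hpt h₁ h₂)⟩

/-- Lemma 4: at a fixed iteration `i` of Algorithm 2 with the x-approval
rule, after all `k` stages, whenever `s_k(u₁) = s_k(u₂) + 1` for `u₁, u₂ ∈ U^i`, the
tie-breaking order prefers `u₂` to `u₁`; likewise for `D^i`. -/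
theorem lemma4_tiebreak
    (x : ℕ) (hx1 : 1 ≤ x) (hx2 : x < Fintype.card O)
    (tb : O → ℕ) (P : List (O → ℕ)) (po : O → ℕ) (p : O) (i k : ℕ)
    (htb : Function.Injective tb) (hP : ∀ q ∈ P, IsVote q) (hpo : IsVote po)
    (hi1 : 1 ≤ i) (hi2 : i ≤ (Fintype.card O + 1) / 2) :
    (∀ u1 ∈ UsetAlg (approvalVec (Fintype.card O) x) tb P po p i k,
        ∀ u2 ∈ UsetAlg (approvalVec (Fintype.card O) x) tb P po p i k,
          stageScoreAlg (approvalVec (Fintype.card O) x) tb P po p i k u1 =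
              stageScoreAlg (approvalVec (Fintype.card O) x) tb P po p i k u2 + 1 →
            tb u2 < tb u1) ∧
      ∀ d1 ∈ DsetAlg (approvalVec (Fintype.card O) x) tb P po p i k,
        ∀ d2 ∈ DsetAlg (approvalVec (Fintype.card O) x) tb P po p i k,
          stageScoreAlg (approvalVec (Fintype.card O) x) tb P po p i k d1 =
              stageScoreAlg (approvalVec (Fintype.card O) x) tb P po p i k d2 + 1 →
            tb d2 < tb d1 :=
  lemma4_tiebreak_general x htb P (swf_injective htb) _ k
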